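/- arXiv:1907.08157 — 2 statements merged into one kernel-verified Lean document; each statement's English description precedes it below -/
import Mathlib

section
/- Let N_q, N_c ≥ 1, let h : {1,…,N_q} → ℝ with h_n > 0 for all n, and set H_0 := −∑_{n=1}^{N_q} h_n Z_n. Let V_1,…,V_{N_c} ∈ 𝒫^{N_q}. Suppose Ψ : ℝ^{N_c} → ℂ^(2^{N_q}) and E : ℝ^{N_c} → ℝ are analytic in a neighbourhood of 0 and satisfy, for all J in that neighbourhood: (H_0 + ∑_{i=1}^{N_c} J_i V_i)·Ψ(J) = E(J)·Ψ(J), ‖Ψ(J)‖ = 1, ⟨0|Ψ(J)⟩ is real and positive, and Ψ(0) = |0⟩. Then for every multi-index k ∈ ℕ^{N_c}, the multivariate Taylor coefficient Ψ_k := (1/k!)·∂^k_J Ψ(0) of Ψ at J = 0 satisfies Ψ_k = C_k · V^{·k}|0⟩ for some real number C_k. -/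
open Matrix

/-- The single-qubit Pauli matrices `I, X, Y, Z`, indexed by `Fin 4`. -/
noncomputable def pauli1 : Fin 4 → Matrix (Fin 2) (Fin 2) ℂ :=
  ![1, !![0, 1; 1, 0], !![0, -Complex.I; Complex.I, 0], !![1, 0; 0, -1]]

/-- The `N`-qubit Pauli basis element with single-qubit factor `pauli1 (f n)` on qubit `n`. -/
noncomputable def pauliTensor {N : ℕ} (f : Fin N → Fin 4) :
    Matrix (Fin N → Fin 2) (Fin N → Fin 2) ℂ :=
  fun s t => ∏ n, pauli1 (f n) (s n) (t n)

/-- The computational basis state `|s⟩`. -/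
def ket {N : ℕ} (s : Fin N → Fin 2) : (Fin N → Fin 2) → ℂ :=
  fun t => if t = s then 1 else 0

/-- The partial derivative of `F` in the `i`-th coordinate direction. -/
noncomputable def pderiv {n : ℕ} {E : Type*} [NormedAddCommGroup E] [NormedSpace ℝ E]
    (i : Fin n) (F : (Fin n → ℝ) → E) : (Fin n → ℝ) → E :=
  fun J => fderiv ℝ F J (Pi.single i 1)

/-- The iterated partial derivative `∂^k F` for a multi-index `k`. -/
noncomputable def iterPDeriv {n : ℕ} {E : Type*} [NormedAddCommGroup E] [NormedSpace ℝ E]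
    (k : Fin n → ℕ) (F : (Fin n → ℝ) → E) : (Fin n → ℝ) → E :=
  (List.finRange n).foldr (fun i G => (pderiv i)^[k i] G) F

/-- The ordered power `V^{·k} = V_1^{k_1}·…·V_{N_c}^{k_{N_c}}`. -/
noncomputable def Vpow {Nq Nc : ℕ} (V : Fin Nc → Matrix (Fin Nq → Fin 2) (Fin Nq → Fin 2) ℂ)
    (k : Fin Nc → ℕ) : Matrix (Fin Nq → Fin 2) (Fin Nq → Fin 2) ℂ :=
  (List.ofFn fun i => V i ^ k i).prod

open Filter Topology

lemma aux_uniq {ι X : Type*} [Fintype ι] [TopologicalSpace X] (x0 : X) (o : ι) (d : ι → ℂ)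
    (hd : ∀ s, s ≠ o → d s ≠ d o) (W : X → Matrix ι ι ℂ)
    (hW : Tendsto (fun x => ∑ s, ∑ t, ‖W x s t‖) (𝓝 x0) (𝓝 0))
    (χ χ' : X → ι → ℂ) (e e' : X → ℂ)
    (hχ' : ContinuousAt χ' x0) (he : Tendsto e (𝓝 x0) (𝓝 (d o)))
    (h1 : ∀ᶠ x in 𝓝 x0, χ x o = 1) (h1' : ∀ᶠ x in 𝓝 x0, χ' x o = 1)
    (h2 : ∀ᶠ x in 𝓝 x0, ∀ s, d s * χ x s + ∑ t, W x s t * χ x t = e x * χ x s)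
    (h2' : ∀ᶠ x in 𝓝 x0, ∀ s, d s * χ' x s + ∑ t, W x s t * χ' x t = e' x * χ' x s) :
    ∀ᶠ x in 𝓝 x0, χ x = χ' x := by
  obtain ⟨g, hg, hgd⟩ : ∃ g : ℝ, 0 < g ∧ ∀ s, s ≠ o → g ≤ ‖d s - d o‖ := by
    classical
    by_cases hne : (Finset.univ.filter (fun s => s ≠ o)).Nonempty
    · obtain ⟨m, hm, hmin⟩ := Finset.exists_min_image _ (fun s => ‖d s - d o‖) hne
      refine ⟨‖d m - d o‖, ?_, fun s hs => hmin s (by simpa using hs)⟩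
      have := hd m (by simpa using hm)
      exact norm_pos_iff.2 (sub_ne_zero.2 this)
    · refine ⟨1, one_pos, fun s hs => ?_⟩
      exact absurd ⟨s, by simpa using hs⟩ hne
  have hK : Tendsto (fun x => (∑ s, ∑ t, ‖W x s t‖) * (1 + ‖χ' x‖) + ‖e x - d o‖) (𝓝 x0)
      (𝓝 (0 * (1 + ‖χ' x0‖) + ‖d o - d o‖)) :=
    (hW.mul (tendsto_const_nhds.add hχ'.norm)).add (he.sub_const _).norm
  simp only [zero_mul, sub_self, norm_zero, add_zero] at hK
  have hKg := hK.eventually (gt_mem_nhds hg)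
  filter_upwards [hKg, h1, h1', h2, h2'] with x hx a1 a1' a2 a2'
  set δ := ∑ s, ∑ t, ‖W x s t‖ with hδ
  set D := χ x - χ' x with hD
  have hWD : ∀ s, ‖∑ t, W x s t * D t‖ ≤ δ * ‖D‖ := by
    intro s
    calc ‖∑ t, W x s t * D t‖ ≤ ∑ t, ‖W x s t * D t‖ := norm_sum_le _ _
      _ ≤ ∑ t, ‖W x s t‖ * ‖D‖ := by
          refine Finset.sum_le_sum fun t _ => ?_
          rw [norm_mul]
          exact mul_le_mul_of_nonneg_left (norm_le_pi_norm D t) (norm_nonneg _)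
      _ = (∑ t, ‖W x s t‖) * ‖D‖ := by rw [Finset.sum_mul]
      _ ≤ δ * ‖D‖ := by
          refine mul_le_mul_of_nonneg_right ?_ (norm_nonneg _)
          exact Finset.single_le_sum (f := fun s => ∑ t, ‖W x s t‖)
            (fun s _ => Finset.sum_nonneg fun t _ => norm_nonneg _) (Finset.mem_univ s)
  have hWs : ∀ s, ∑ t, W x s t * D t = ∑ t, W x s t * χ x t - ∑ t, W x s t * χ' x t := by
    intro s
    rw [← Finset.sum_sub_distrib]
    exact Finset.sum_congr rfl fun t _ => by simp [hD, mul_sub]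
  have hee : e x - e' x = ∑ t, W x o t * D t := by
    have b := a2 o
    have b' := a2' o
    rw [a1] at b
    rw [a1'] at b'
    rw [hWs]
    linear_combination b' - b
  have hDs : ∀ s, g * ‖D s‖ ≤ (δ * (1 + ‖χ' x‖) + ‖e x - d o‖) * ‖D‖ := by
    intro s
    have hδ0 : 0 ≤ δ := Finset.sum_nonneg fun s _ => Finset.sum_nonneg fun t _ => norm_nonneg _
    by_cases hs : s = o
    · have : D s = 0 := by simp [hD, hs, a1, a1']
      rw [this, norm_zero, mul_zero]
      positivity
    · have key : (d s - d o) * D s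
          = (e x - d o) * D s + (∑ t, W x o t * D t) * χ' x s - ∑ t, W x s t * D t := by
        rw [← hee, hWs s]
        have : D s = χ x s - χ' x s := rfl
        rw [this]
        linear_combination a2 s - a2' s
      calc g * ‖D s‖ ≤ ‖d s - d o‖ * ‖D s‖ :=
            mul_le_mul_of_nonneg_right (hgd s hs) (norm_nonneg _)
        _ = ‖(d s - d o) * D s‖ := (norm_mul _ _).symm
        _ ≤ ‖e x - d o‖ * ‖D s‖ + ‖∑ t, W x o t * D t‖ * ‖χ' x s‖ + ‖∑ t, W x s t * D t‖ := by
            rw [key, ← norm_mul, ← norm_mul]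
            exact (norm_sub_le _ _).trans (add_le_add_left (norm_add_le _ _) _)
        _ ≤ ‖e x - d o‖ * ‖D‖ + (δ * ‖D‖) * ‖χ' x‖ + δ * ‖D‖ := by
            gcongr
            · exact norm_le_pi_norm D s
            · exact hWD o
            · exact norm_le_pi_norm _ s
            · exact hWD s
        _ = _ := by ring
  have hDn : ‖D‖ ≤ ((δ * (1 + ‖χ' x‖) + ‖e x - d o‖) * ‖D‖) / g := by
    have hδ0 : 0 ≤ δ := Finset.sum_nonneg fun s _ => Finset.sum_nonneg fun t _ => norm_nonneg _
    refine (pi_norm_le_iff_of_nonneg (by positivity)).2 fun s => ?_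
    rw [le_div_iff₀ hg, mul_comm]
    exact hDs s
  rw [le_div_iff₀ hg] at hDn
  have : ‖D‖ = 0 := by
    have := norm_nonneg D
    nlinarith
  exact sub_eq_zero.1 (norm_eq_zero.1 this)

lemma aux_pderiv_congr {n : ℕ} {E : Type*} [NormedAddCommGroup E] [NormedSpace ℝ E]
    (i : Fin n) {F G : (Fin n → ℝ) → E} {x} (hFG : F =ᶠ[𝓝 x] G) :
    pderiv i F =ᶠ[𝓝 x] pderiv i G := by
  have := hFG.fderiv (𝕜 := ℝ)
  filter_upwards [this] with y hy
  simp [pderiv, hy]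

lemma aux_iter_congr {n : ℕ} {E : Type*} [NormedAddCommGroup E] [NormedSpace ℝ E]
    (k : Fin n → ℕ) {F G : (Fin n → ℝ) → E} {x} (hFG : F =ᶠ[𝓝 x] G) :
    iterPDeriv k F =ᶠ[𝓝 x] iterPDeriv k G := by
  unfold iterPDeriv
  induction List.finRange n with
  | nil => exact hFG
  | cons i l ih =>
    simp only [List.foldr_cons]
    induction k i with
    | zero => exact ih
    | succ m ihm =>
      rw [Function.iterate_succ_apply', Function.iterate_succ_apply']
      exact aux_pderiv_congr i ihm

lemma aux_pderiv_T {n : ℕ} {E : Type*} [NormedAddCommGroup E] [NormedSpace ℝ E]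
    (T : E ≃L[ℝ] E) (A : (Fin n → ℝ) ≃L[ℝ] (Fin n → ℝ)) (ε : Fin n → ℝ)
    (hA : ∀ J i, A J i = ε i * J i) (c : ℝ) (i : Fin n) (F : (Fin n → ℝ) → E) :
    pderiv i (fun J => c • T (F (A J))) = fun J => (c * ε i) • T (pderiv i F (A J)) := by
  funext J
  have e1 : (fun J => c • T (F (A J))) = c • ((T ∘ F) ∘ A) := rfl
  have hs : A (Pi.single i 1) = ε i • Pi.single i (1 : ℝ) := by
    funext j
    rw [hA]
    by_cases hj : j = i
    · subst hj; simp
    · simp [hj]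
  unfold pderiv
  rw [e1, fderiv_const_smul_field, Pi.smul_apply, A.comp_right_fderiv, T.comp_fderiv]
  simp [hs, mul_smul]

lemma aux_iter_T {n : ℕ} {E : Type*} [NormedAddCommGroup E] [NormedSpace ℝ E]
    (T : E ≃L[ℝ] E) (A : (Fin n → ℝ) ≃L[ℝ] (Fin n → ℝ)) (ε : Fin n → ℝ)
    (hA : ∀ J i, A J i = ε i * J i) (k : Fin n → ℕ) (F : (Fin n → ℝ) → E) :
    iterPDeriv k (fun J => T (F (A J))) =
      fun J => (∏ i, ε i ^ k i) • T (iterPDeriv k F (A J)) := by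
  have hit : ∀ (i : Fin n) (m : ℕ) (c : ℝ) (G : (Fin n → ℝ) → E),
      (pderiv i)^[m] (fun J => c • T (G (A J))) =
        fun J => (c * ε i ^ m) • T ((pderiv i)^[m] G (A J)) := by
    intro i m c G
    induction m with
    | zero => simp
    | succ m ih =>
      rw [Function.iterate_succ_apply', ih, aux_pderiv_T T A ε hA, Function.iterate_succ_apply']
      simp only [pow_succ, mul_assoc]
  have hl : ∀ l : List (Fin n),
      l.foldr (fun i G => (pderiv i)^[k i] G) (fun J => T (F (A J))) =
        fun J => ((l.map fun i => ε i ^ k i).prod) •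
          T (l.foldr (fun i G => (pderiv i)^[k i] G) F (A J)) := by
    intro l
    induction l with
    | nil => simp
    | cons i l ih =>
      simp only [List.foldr_cons, List.map_cons, List.prod_cons]
      rw [ih, hit]
      funext J
      rw [mul_comm]
  unfold iterPDeriv
  rw [hl, ← List.ofFn_eq_map, List.prod_ofFn]

/-- Symmetry of the ground-state family. -/
lemma aux_symm {ι : Type*} [Fintype ι] {Nc : ℕ} (o : ι) (d : ι → ℝ)
    (hd : ∀ s, s ≠ o → d s ≠ d o) (V : Fin Nc → Matrix ι ι ℂ)
    (Ψ : (Fin Nc → ℝ) → ι → ℂ) (E : (Fin Nc → ℝ) → ℝ)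
    (hΨc : ContinuousAt Ψ 0) (hEc : ContinuousAt E 0) (hE0 : E 0 = d o)
    (heig : ∀ᶠ J in 𝓝 (0 : Fin Nc → ℝ), ∀ s,
      (d s : ℂ) * Ψ J s + ∑ t, (∑ i, (J i : ℂ) * V i s t) * Ψ J t = (E J : ℂ) * Ψ J s)
    (hnorm : ∀ᶠ J in 𝓝 (0 : Fin Nc → ℝ), ∑ s, Complex.normSq (Ψ J s) = 1)
    (hreal : ∀ᶠ J in 𝓝 (0 : Fin Nc → ℝ), (Ψ J o).im = 0 ∧ 0 < (Ψ J o).re)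
    (σ : ι → ℝ) (hσ : ∀ s, σ s * σ s = 1) (hσo : σ o = 1)
    (ε : Fin Nc → ℝ) (hε : ∀ i, ε i * ε i = 1)
    (κ : ℂ ≃ₐ[ℝ] ℂ) (hκ : ∀ z, Complex.normSq (κ z) = Complex.normSq z)
    (hV : ∀ i s t, (σ s : ℂ) * κ (V i s t) = ε i * V i s t * σ t) (k : Fin Nc → ℕ) (s : ι) :
    iterPDeriv k Ψ 0 s = (∏ i, (ε i : ℂ) ^ k i) * (σ s * κ (iterPDeriv k Ψ 0 s)) := by
  have hσ0 : ∀ s, σ s ≠ 0 := fun s h0 => by simpa [h0] using hσ s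
  have hε0 : ∀ s, ε s ≠ 0 := fun s h0 => by simpa [h0] using hε s
  let T : (ι → ℂ) ≃L[ℝ] (ι → ℂ) := (LinearEquiv.piCongrRight fun s =>
    κ.toLinearEquiv.trans (LinearEquiv.smulOfNeZero ℝ ℂ (σ s) (hσ0 s))).toContinuousLinearEquiv
  let A : (Fin Nc → ℝ) ≃L[ℝ] (Fin Nc → ℝ) := (LinearEquiv.piCongrRight fun s =>
    (LinearEquiv.smulOfNeZero ℝ ℝ (ε s) (hε0 s))).toContinuousLinearEquiv
  have hT : ∀ f s, T f s = σ s * κ (f s) := fun f s => by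
    rw [← Complex.real_smul]; rfl
  have hA : ∀ J i, A J i = ε i * J i := fun J i => rfl
  have hκr : ∀ r : ℝ, κ (r : ℂ) = r := fun r => by
    simpa using κ.commutes r
  have hAt : Tendsto A (𝓝 0) (𝓝 0) := by
    have := A.continuous.tendsto 0
    rwa [map_zero] at this
  -- the transformed family
  have hTc : ContinuousAt (fun J => T (Ψ (A J))) 0 := by
    refine T.continuous.continuousAt.comp (ContinuousAt.comp (g := Ψ) ?_ A.continuous.continuousAt)
    rwa [map_zero]
  have heq' : ∀ᶠ J in 𝓝 (0 : Fin Nc → ℝ), ∀ s,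
      (d s : ℂ) * T (Ψ (A J)) s + ∑ t, (∑ i, (J i : ℂ) * V i s t) * T (Ψ (A J)) t
        = (E (A J) : ℂ) * T (Ψ (A J)) s := by
    filter_upwards [hAt.eventually heig] with J hJ s
    have h3 := congrArg (fun z => (σ s : ℂ) * κ z) (hJ s)
    simp only [map_add, map_mul, map_sum, hκr, hA, Complex.ofReal_mul] at h3
    simp only [hT]
    have h4 : ∀ t, (∑ i, (J i : ℂ) * V i s t) * (σ t * κ (Ψ (A J) t)) =
        σ s * ((∑ i, (ε i : ℂ) * (J i : ℂ) * κ (V i s t)) * κ (Ψ (A J) t)) := by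
      intro t
      rw [Finset.sum_mul, Finset.sum_mul, Finset.mul_sum]
      refine Finset.sum_congr rfl fun i _ => ?_
      have h5 := hV i s t
      have h6 : (ε i : ℂ) * ε i = 1 := by exact_mod_cast hε i
      linear_combination (-(ε i : ℂ) * J i * κ (Ψ (A J) t)) * h5 -
        (J i * V i s t * σ t * κ (Ψ (A J) t)) * h6
    rw [Finset.sum_congr rfl fun t _ => h4 t, ← Finset.mul_sum]
    linear_combination h3
  have hTo : ∀ᶠ J in 𝓝 (0 : Fin Nc → ℝ), (T (Ψ (A J)) o).im = 0 ∧ 0 < (T (Ψ (A J)) o).re := by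
    filter_upwards [hAt.eventually hreal] with J hJ
    have : Ψ (A J) o = ((Ψ (A J) o).re : ℂ) := by
      apply Complex.ext <;> simp [hJ.1]
    rw [hT, this, hκr, hσo]
    simpa using hJ.2
  have hTn : ∀ᶠ J in 𝓝 (0 : Fin Nc → ℝ), ∑ s, Complex.normSq (T (Ψ (A J)) s) = 1 := by
    filter_upwards [hAt.eventually hnorm] with J hJ
    simp only [hT, Complex.normSq_mul, hκ, Complex.normSq_ofReal, hσ, one_mul]
    exact hJ
  have hW : Tendsto (fun J : Fin Nc → ℝ => ∑ s, ∑ t, ‖∑ i, (J i : ℂ) * V i s t‖) (𝓝 0) (𝓝 0) := by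
    have : Continuous (fun J : Fin Nc → ℝ => ∑ s, ∑ t, ‖∑ i, (J i : ℂ) * V i s t‖) := by
      fun_prop
    simpa using this.tendsto 0
  have hEC : Tendsto (fun J => (E J : ℂ)) (𝓝 0) (𝓝 (d o : ℂ)) := by
    have h7 : Tendsto E (𝓝 0) (𝓝 (d o)) := hE0 ▸ hEc
    exact (Complex.continuous_ofReal.tendsto _).comp h7
  have hpos : ∀ z : ℂ, (z.im = 0 ∧ 0 < z.re) → z ≠ 0 := by
    rintro z ⟨_, hz⟩ rfl
    simp at hz
  have hTo0 : T (Ψ (A 0)) o ≠ 0 := hpos _ hTo.self_of_nhds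
  have hscale : ∀ (J : Fin Nc → ℝ) (f : ι → ℂ) (c e : ℂ),
      (∀ s, (d s : ℂ) * f s + ∑ t, (∑ i, (J i : ℂ) * V i s t) * f t = e * f s) →
      ∀ s, (d s : ℂ) * (c * f s) + ∑ t, (∑ i, (J i : ℂ) * V i s t) * (c * f t) = e * (c * f s) := by
    intro J f c e hf s
    have : ∀ t, (∑ i, (J i : ℂ) * V i s t) * (c * f t)
        = c * ((∑ i, (J i : ℂ) * V i s t) * f t) := fun t => by ring
    rw [Finset.sum_congr rfl fun t _ => this t, ← Finset.mul_sum]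
    linear_combination c * hf s
  have hu := aux_uniq (0 : Fin Nc → ℝ) o (fun s => (d s : ℂ))
    (fun s hs => by exact_mod_cast hd s hs)
    (fun J => Matrix.of fun s t => ∑ i, (J i : ℂ) * V i s t) (by simpa using hW)
    (fun J s => (Ψ J o)⁻¹ * Ψ J s) (fun J s => (T (Ψ (A J)) o)⁻¹ * T (Ψ (A J)) s)
    (fun J => E J) (fun J => E (A J))
    (by
      rw [continuousAt_pi]
      intro s
      have hc := continuousAt_pi.1 hTc
      exact ((hc o).inv₀ hTo0).mul (hc s))
    hEC
    (by filter_upwards [hreal] with J hJ using inv_mul_cancel₀ (hpos _ hJ))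
    (by filter_upwards [hTo] with J hJ using inv_mul_cancel₀ (hpos _ hJ))
    (by filter_upwards [heig] with J hJ using hscale J _ _ _ hJ)
    (by filter_upwards [heq'] with J hJ using hscale J _ _ _ hJ)
  have hfin : Ψ =ᶠ[𝓝 0] fun J => T (Ψ (A J)) := by
    filter_upwards [hu, hreal, hTo, hnorm, hTn] with J hJ r r' n n'
    generalize T (Ψ (A J)) = f at *
    generalize Ψ J = f0 at *
    obtain ⟨a, ha⟩ : ∃ a : ℝ, f0 o = a := ⟨_, Complex.ext rfl r.1⟩
    obtain ⟨b, hb⟩ : ∃ b : ℝ, f o = b := ⟨_, Complex.ext rfl r'.1⟩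
    have ha0 : 0 < a := by simpa [ha] using r.2
    have hb0 : 0 < b := by simpa [hb] using r'.2
    have haC : (a : ℂ) ≠ 0 := by exact_mod_cast ha0.ne'
    have hbC : (b : ℂ) ≠ 0 := by exact_mod_cast hb0.ne'
    have hr : ∀ s, f0 s = ((a / b : ℝ) : ℂ) * f s := by
      intro s
      have := congrFun hJ s
      simp only [ha, hb] at this
      push_cast
      field_simp at this ⊢
      linear_combination this
    have hab : (a / b) * (a / b) = 1 := by
      simp only [hr, Complex.normSq_mul, Complex.normSq_ofReal] at n
      rw [← Finset.mul_sum, n', mul_one] at n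
      exact n
    have hab1 : a / b = 1 := by
      have : 0 < a / b := by positivity
      nlinarith
    funext s
    rw [hr s, hab1]
    simp
  have h8 := (aux_iter_congr k hfin).eq_of_nhds
  rw [aux_iter_T T A ε hA] at h8
  simp only [map_zero] at h8
  have h9 := congrFun h8 s
  simp only [Pi.smul_apply, hT, Complex.real_smul] at h9
  push_cast at h9
  exact h9

/-- The ordered power obeys the same symmetry. -/
lemma aux_Vpow {Nq Nc : ℕ} (V : Fin Nc → Matrix (Fin Nq → Fin 2) (Fin Nq → Fin 2) ℂ)
    (σ : (Fin Nq → Fin 2) → ℝ)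
    (ε : Fin Nc → ℝ) (κ : ℂ ≃ₐ[ℝ] ℂ)
    (hV : ∀ i s t, (σ s : ℂ) * κ (V i s t) = ε i * V i s t * σ t) (k : Fin Nc → ℕ) (s t) :
    (σ s : ℂ) * κ (Vpow V k s t) = (∏ i, (ε i : ℂ) ^ k i) * Vpow V k s t * σ t := by
  have hmul : ∀ (M N : Matrix (Fin Nq → Fin 2) (Fin Nq → Fin 2) ℂ) (a b : ℂ),
      (∀ s t, (σ s : ℂ) * κ (M s t) = a * M s t * σ t) →
      (∀ s t, (σ s : ℂ) * κ (N s t) = b * N s t * σ t) →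
      (∀ s t, (σ s : ℂ) * κ ((M * N) s t) = (a * b) * (M * N) s t * σ t) := by
    intro M N a b hM hN s t
    simp only [Matrix.mul_apply, map_sum, map_mul, Finset.mul_sum, Finset.sum_mul]
    refine Finset.sum_congr rfl fun u _ => ?_
    have h1 := hM s u
    have h2 := hN u t
    linear_combination κ (N u t) * h1 + a * M s u * h2
  have hone : ∀ s t, (σ s : ℂ) * κ ((1 : Matrix (Fin Nq → Fin 2) (Fin Nq → Fin 2) ℂ) s t)
      = 1 * (1 : Matrix (Fin Nq → Fin 2) (Fin Nq → Fin 2) ℂ) s t * σ t := by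
    intro s t
    by_cases hst : s = t
    · subst hst; simp
    · simp [Matrix.one_apply_ne hst]
  have hpow : ∀ i m s t, (σ s : ℂ) * κ ((V i ^ m) s t) = (ε i : ℂ) ^ m * (V i ^ m) s t * σ t := by
    intro i m
    induction m with
    | zero => simpa using hone
    | succ m ih =>
      rw [pow_succ, pow_succ]
      exact hmul _ _ _ _ ih (hV i)
  have hl : ∀ (l : List (Fin Nc)) s t, (σ s : ℂ) * κ ((l.map fun i => V i ^ k i).prod s t)
      = (l.map fun i => (ε i : ℂ) ^ k i).prod * (l.map fun i => V i ^ k i).prod s t * σ t := by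
    intro l
    induction l with
    | nil => simpa using hone
    | cons i l ih =>
      simp only [List.map_cons, List.prod_cons]
      exact hmul _ _ _ _ (hpow i _) ih
  have := hl (List.finRange Nc) s t
  rw [← List.ofFn_eq_map, ← List.ofFn_eq_map, List.prod_ofFn] at this
  exact this

lemma aux_pauli_sq {N : ℕ} (f : Fin N → Fin 4) : pauliTensor f * pauliTensor f = 1 := by
  have h1 : ∀ a : Fin 4, ∀ s u, ∑ t, pauli1 a s t * pauli1 a t u = if s = u then 1 else 0 := by
    intro a s u
    fin_cases a <;> fin_cases s <;> fin_cases u <;> simp [pauli1]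
  ext s u
  simp only [Matrix.mul_apply, pauliTensor, ← Finset.prod_mul_distrib]
  have h2 := Finset.prod_univ_sum (fun _ : Fin N => (Finset.univ : Finset (Fin 2)))
    (fun n t => pauli1 (f n) (s n) t * pauli1 (f n) t (u n))
  rw [Fintype.piFinset_univ] at h2
  rw [← h2]
  simp only [h1]
  rw [Matrix.one_apply]
  by_cases hsu : s = u
  · simp [hsu]
  · rw [if_neg hsu]
    obtain ⟨n, hn⟩ := Function.ne_iff.1 hsu
    exact Finset.prod_eq_zero (Finset.mem_univ n) (by simp [hn])

lemma aux_Z {N : ℕ} (n : Fin N) (s t : Fin N → Fin 2) :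
    pauliTensor (fun q => if q = n then (3 : Fin 4) else 0) s t
      = if s = t then (((if s n = 0 then 1 else -1 : ℝ)) : ℂ) else 0 := by
  have h3 : ∀ a b : Fin 2, pauli1 3 a b = if a = b then (((if a = 0 then 1 else -1 : ℝ)) : ℂ) else 0 := by
    intro a b
    fin_cases a <;> fin_cases b <;> simp [pauli1]
  have h0 : ∀ a b : Fin 2, pauli1 0 a b = if a = b then 1 else 0 := by
    intro a b
    fin_cases a <;> fin_cases b <;> simp [pauli1]
  unfold pauliTensor
  by_cases hst : s = t
  · subst hst
    rw [Finset.prod_eq_single n]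
    · simp [h3]
    · intro q _ hq
      simp [hq, h0]
    · simp
  · rw [if_neg hst]
    obtain ⟨q, hq⟩ := Function.ne_iff.1 hst
    refine Finset.prod_eq_zero (Finset.mem_univ q) ?_
    by_cases hqn : q = n
    · subst hqn; simp [h3, hq]
    · simp [hqn, h0, hq]

/-- sign of a bit -/
noncomputable def auxSgn (a : Fin 2) : ℝ := if a = 0 then 1 else -1

/-- sign from the bit-flip part -/
noncomputable def auxX : Fin 4 → ℝ := ![1, -1, -1, 1]

/-- sign under conjugation -/
noncomputable def auxY : Fin 4 → ℝ := ![1, 1, -1, 1]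

lemma aux_symX {N : ℕ} (n : Fin N) (f : Fin N → Fin 4) (s t) :
    (auxSgn (s n) : ℂ) * pauliTensor f s t = auxX (f n) * pauliTensor f s t * auxSgn (t n) := by
  have h1 : ∀ (a : Fin 4) (s t : Fin 2),
      (auxSgn s : ℂ) * pauli1 a s t = auxX a * pauli1 a s t * auxSgn t := by
    intro a s t
    fin_cases a <;> fin_cases s <;> fin_cases t <;> simp [pauli1, auxX, auxSgn]
  unfold pauliTensor
  rw [← Finset.mul_prod_erase _ _ (Finset.mem_univ n)]
  linear_combination (∏ x ∈ Finset.univ.erase n, pauli1 (f x) (s x) (t x)) * h1 (f n) (s n) (t n)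

lemma aux_symY {N : ℕ} (f : Fin N → Fin 4) (s t) :
    Complex.conjAe (pauliTensor f s t) = ((∏ n, auxY (f n) : ℝ) : ℂ) * pauliTensor f s t := by
  have h1 : ∀ (a : Fin 4) (s t : Fin 2),
      Complex.conjAe (pauli1 a s t) = auxY a * pauli1 a s t := by
    intro a s t
    fin_cases a <;> fin_cases s <;> fin_cases t <;> simp [pauli1, auxY]
  unfold pauliTensor
  rw [map_prod, Complex.ofReal_prod, ← Finset.prod_mul_distrib]
  exact Finset.prod_congr rfl fun n _ => h1 _ _ _

/-- for the analytic ground-state family `Ψ(J)` of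
`H_0 + ∑_i J_i V_i` (with `H_0 = −∑_n h_n Z_n`, `h_n > 0`), normalized with
`⟨0|Ψ(J)⟩` real positive and `Ψ(0) = |0⟩`, every multivariate Taylor coefficient
`Ψ_k = (1/k!)∂^k_J Ψ(0)` is a real multiple of `V^{·k}|0⟩`. -/
theorem perturbative_coefficients_real_multiple {Nq Nc : ℕ} (hNq : 1 ≤ Nq) (hNc : 1 ≤ Nc)
    (h : Fin Nq → ℝ) (hpos : ∀ n, 0 < h n)
    (Vf : Fin Nc → Fin Nq → Fin 4)
    (Ψ : (Fin Nc → ℝ) → (Fin Nq → Fin 2) → ℂ)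
    (E : (Fin Nc → ℝ) → ℝ)
    (Unb : Set (Fin Nc → ℝ)) (hUnb : Unb ∈ nhds (0 : Fin Nc → ℝ))
    (hΨan : ∀ J ∈ Unb, AnalyticAt ℝ Ψ J)
    (hEan : ∀ J ∈ Unb, AnalyticAt ℝ E J)
    (heig : ∀ J ∈ Unb,
      ((-∑ n : Fin Nq, ((h n : ℝ) : ℂ) • pauliTensor (fun q => if q = n then (3 : Fin 4) else 0)) +
        ∑ i : Fin Nc, ((J i : ℝ) : ℂ) • pauliTensor (Vf i)).mulVec (Ψ J) = ((E J : ℝ) : ℂ) • Ψ J)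
    (hnorm : ∀ J ∈ Unb, (∑ x, Complex.normSq (Ψ J x)) = 1)
    (hreal : ∀ J ∈ Unb, (Ψ J (fun _ => 0)).im = 0 ∧ 0 < (Ψ J (fun _ => 0)).re)
    (hΨ0 : Ψ 0 = ket (fun _ => 0)) :
    ∀ k : Fin Nc → ℕ, ∃ C : ℝ,
      (∏ i, (Nat.factorial (k i) : ℝ))⁻¹ • iterPDeriv k Ψ 0
        = (C : ℂ) • (Vpow (fun i => pauliTensor (Vf i)) k).mulVec (ket (fun _ => 0)) := by
  intro k
  set V := fun i => pauliTensor (Vf i) with hVdef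
  set o : Fin Nq → Fin 2 := fun _ => 0 with ho
  let d : (Fin Nq → Fin 2) → ℝ := fun s => -∑ n, h n * (if s n = 0 then 1 else -1)
  have hd : ∀ s, s ≠ o → d s ≠ d o := by
    intro s hs
    obtain ⟨m, hm⟩ := Function.ne_iff.1 hs
    have : d o < d s := by
      simp only [d]
      refine neg_lt_neg (Finset.sum_lt_sum (fun n _ => ?_) ⟨m, Finset.mem_univ m, ?_⟩)
      · have := hpos n
        have ho' : o n = 0 := rfl
        rw [if_pos ho']
        split_ifs <;> linarith
      · have := hpos m
        have hm' : ¬ s m = 0 := hm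
        simp [hm', ho]
        linarith
    exact this.ne'
  have hH : ∀ (J : Fin Nc → ℝ) (f : (Fin Nq → Fin 2) → ℂ) (s : Fin Nq → Fin 2),
      ((-∑ n : Fin Nq, ((h n : ℝ) : ℂ) • pauliTensor (fun q => if q = n then (3 : Fin 4) else 0)) +
        ∑ i : Fin Nc, ((J i : ℝ) : ℂ) • V i).mulVec f s
      = (d s : ℂ) * f s + ∑ t, (∑ i, (J i : ℂ) * V i s t) * f t := by
    intro J f s
    rw [Matrix.add_mulVec, Pi.add_apply]
    congr 1
    · simp only [Matrix.mulVec, dotProduct, Matrix.neg_apply, Matrix.sum_apply, Matrix.smul_apply,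
        aux_Z, smul_eq_mul]
      rw [Finset.sum_eq_single s]
      · simp only [d, if_true]
        push_cast
        rfl
      · intro t _ ht
        simp [ht.symm]
      · simp
    · simp only [Matrix.mulVec, dotProduct, Matrix.sum_apply, Matrix.smul_apply, smul_eq_mul]
  have heig' : ∀ᶠ J in 𝓝 (0 : Fin Nc → ℝ), ∀ s,
      (d s : ℂ) * Ψ J s + ∑ t, (∑ i, (J i : ℂ) * V i s t) * Ψ J t = (E J : ℂ) * Ψ J s := by
    filter_upwards [hUnb] with J hJ s
    rw [← hH, heig J hJ]
    simp
  have h0 := mem_of_mem_nhds hUnb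
  have hE0 : E 0 = d o := by
    have := heig'.self_of_nhds o
    rw [hΨ0] at this
    simp [ket] at this
    exact_mod_cast this.symm
  have hsym := aux_symm o d hd V Ψ E (hΨan 0 h0).continuousAt (hEan 0 h0).continuousAt hE0 heig'
    (by filter_upwards [hUnb] with J hJ using hnorm J hJ)
    (by filter_upwards [hUnb] with J hJ using hreal J hJ)
  have hsg : ∀ a, auxSgn a * auxSgn a = 1 := by intro a; unfold auxSgn; split_ifs <;> norm_num
  have hX1 : ∀ a, auxX a * auxX a = 1 := by intro a; fin_cases a <;> simp [auxX]
  have hY1 : ∀ a, auxY a * auxY a = 1 := by intro a; fin_cases a <;> simp [auxY]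
  have hX := fun n => hsym (fun s => auxSgn (s n)) (fun s => hsg _) (by simp [auxSgn, ho])
    (fun i => auxX (Vf i n)) (fun i => hX1 _) AlgEquiv.refl (fun _ => rfl)
    (fun i s t => aux_symX n (Vf i) s t) k
  have hVX := fun n => aux_Vpow V (fun s => auxSgn (s n))
    (fun i => auxX (Vf i n)) AlgEquiv.refl (fun i s t => aux_symX n (Vf i) s t) k
  have hY := hsym (fun _ => 1) (fun s => by simp) rfl
    (fun i => ∏ n, auxY (Vf i n)) (fun i => by simp [← Finset.prod_mul_distrib, hY1])
    Complex.conjAe (fun z => by simp)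
    (fun i s t => by simpa using aux_symY (Vf i) s t) k
  have hVY := aux_Vpow V (fun _ => 1)
    (fun i => ∏ n, auxY (Vf i n)) Complex.conjAe
    (fun i s t => by simpa using aux_symY (Vf i) s t) k
  -- the vector V^k |0>
  have hv : ∀ s, (Vpow V k).mulVec (ket o) s = Vpow V k s o := by
    intro s
    simp [Matrix.mulVec, dotProduct, ket]
  have hunit : IsUnit (Vpow V k) := by
    unfold Vpow
    have hl : ∀ l : List (Fin Nc), IsUnit (l.map fun i => V i ^ k i).prod := by
      intro l
      induction l with
      | nil => simp
      | cons i l ih =>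
        rw [List.map_cons, List.prod_cons]
        exact (IsUnit.pow _ (IsUnit.of_mul_eq_one _ (aux_pauli_sq (Vf i)))).mul ih
    rw [List.ofFn_eq_map]
    exact hl _
  obtain ⟨s0, hs0⟩ : ∃ s, Vpow V k s o ≠ 0 := by
    by_contra hcon
    push Not at hcon
    obtain ⟨M, hM⟩ := hunit.exists_left_inv
    have := congrFun (congrFun hM o) o
    rw [Matrix.mul_apply] at this
    simp [hcon] at this
  set F := iterPDeriv k Ψ 0 with hF
  have hεX : ∀ n, (∏ i, (auxX (Vf i n) : ℂ) ^ k i) = auxSgn (s0 n) := by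
    intro n
    have h1 := hVX n s0 o
    have h2 : auxSgn (o n) = 1 := by simp [auxSgn, ho]
    simp only [h2, AlgEquiv.coe_refl, id, Complex.ofReal_one, mul_one] at h1
    exact (mul_right_cancel₀ hs0 h1).symm
  have hsgne : ∀ a b : Fin 2, a ≠ b → (auxSgn b : ℂ) * auxSgn a = -1 := by
    intro a b hab
    fin_cases a <;> fin_cases b <;> simp_all [auxSgn]
  have hFs : ∀ s, s ≠ s0 → F s = 0 := by
    intro s hs
    obtain ⟨n, hn⟩ := Function.ne_iff.1 hs
    have h1 := hX n s
    rw [hεX n, ← mul_assoc, hsgne _ _ hn] at h1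
    simp only [AlgEquiv.coe_refl, id] at h1
    linear_combination h1 / 2
  have hvs : ∀ s, s ≠ s0 → Vpow V k s o = 0 := by
    intro s hs
    obtain ⟨n, hn⟩ := Function.ne_iff.1 hs
    have h1 := hVX n s o
    have h2 : auxSgn (o n) = 1 := by simp [auxSgn, ho]
    rw [hεX n] at h1
    simp only [h2, AlgEquiv.coe_refl, id, Complex.ofReal_one, mul_one] at h1
    have h3 := hsgne _ _ hn
    have h4 : (auxSgn (s n) : ℂ) * auxSgn (s n) = 1 := by exact_mod_cast hsg (s n)
    linear_combination (auxSgn (s n) / 2 : ℂ) * h1 - (Vpow V k s o / 2) * h4 +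
      (Vpow V k s o / 2) * h3
  set P : ℂ := ∏ i, ((∏ n, auxY (Vf i n) : ℝ) : ℂ) ^ k i with hP
  have hcF : F s0 = P * (starRingEnd ℂ) (F s0) := by simpa using hY s0
  have hcv : (starRingEnd ℂ) (Vpow V k s0 o) = P * Vpow V k s0 o := by simpa using hVY s0 o
  have hratio : (starRingEnd ℂ) (F s0 / Vpow V k s0 o) = F s0 / Vpow V k s0 o := by
    have hc0 : (starRingEnd ℂ) (Vpow V k s0 o) ≠ 0 := by simpa using hs0
    rw [map_div₀, div_eq_div_iff hc0 hs0, hcv]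
    have hPr : (starRingEnd ℂ) P = P := by
      rw [hP]
      simp only [map_prod, map_pow, Complex.conj_ofReal]
    have h1 := congrArg (starRingEnd ℂ) hcF
    rw [map_mul, hPr, Complex.conj_conj] at h1
    linear_combination (Vpow V k s0 o) * h1
  obtain ⟨c, hc⟩ := Complex.conj_eq_iff_real.1 hratio
  refine ⟨(∏ i, (Nat.factorial (k i) : ℝ))⁻¹ * c, ?_⟩
  funext s
  rw [Pi.smul_apply, Pi.smul_apply, hv, Complex.real_smul, smul_eq_mul, Complex.ofReal_mul,
    mul_assoc]
  congr 1
  by_cases hs : s = s0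
  · rw [hs, ← hc, div_mul_cancel₀ _ hs0]
  · rw [hFs s hs, hvs s hs, mul_zero]
end

section
/- Let N_q, N_c ≥ 1, let h : {1,…,N_q} → ℝ with h_n > 0 for all n, set H_0 := −∑_n h_n Z_n, and let V_1,…,V_{N_c} ∈ 𝒫^{N_q}. Suppose Ψ : ℝ^{N_c} → ℂ^(2^{N_q}) and E : ℝ^{N_c} → ℝ are analytic near 0 with (H_0 + ∑_i J_i V_i)Ψ(J) = E(J)Ψ(J), ‖Ψ(J)‖ = 1, ⟨0|Ψ(J)⟩ real and positive, and Ψ(0) = |0⟩, and for each multi-index k let C_k be the (unique) real number with Taylor coefficient (1/k!)∂^k_J Ψ(0) = C_k V^{·k}|0⟩. If k = k_A + k_B where k_A, k_B ∈ ℕ^{N_c} are nonzero multi-indices with disjoint supports, then the perturbative contributions factorize: C_k = C_{k_A} · C_{k_B}. -/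
open Matrix

namespace DCF

/-- Keep the bits in `S`, set the others to zero. -/
def mask {N : ℕ} (S : Finset (Fin N)) (s : Fin N → Fin 2) : Fin N → Fin 2 :=
  fun q => if q ∈ S then s q else 0

/-- Product of two vectors along the bipartition `S`, `Sᶜ`. -/
noncomputable def tens {N : ℕ} (S : Finset (Fin N)) (u w : (Fin N → Fin 2) → ℂ) :
    (Fin N → Fin 2) → ℂ :=
  fun s => u (mask S s) * w (mask Sᶜ s)

lemma tens_comm {N : ℕ} (S : Finset (Fin N)) (u w : (Fin N → Fin 2) → ℂ) :
    tens S u w = tens Sᶜ w u := by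
  funext s
  simp [tens, mul_comm]

lemma mask_zero {N : ℕ} (S : Finset (Fin N)) : mask S (fun _ => 0) = fun _ => 0 := by
  funext q
  simp [mask]

lemma pauli1_zero (a b : Fin 2) : pauli1 0 a b = if a = b then 1 else 0 := by
  simp [pauli1, Matrix.one_apply]

lemma pauli1_three (a b : Fin 2) :
    pauli1 3 a b = if a = b then (if a = 0 then 1 else -1) else 0 := by
  fin_cases a <;> fin_cases b <;> simp [pauli1]

lemma pauli1_herm (f : Fin 4) (a b : Fin 2) : star (pauli1 f a b) = pauli1 f b a := by
  fin_cases f <;> fin_cases a <;> fin_cases b <;> simp [pauli1]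

lemma pauli1_sq (f : Fin 4) (a b : Fin 2) :
    ∑ c, pauli1 f a c * pauli1 f c b = if a = b then 1 else 0 := by
  fin_cases f <;> fin_cases a <;> fin_cases b <;> simp [pauli1]

lemma pauliTensor_herm {N : ℕ} (f : Fin N → Fin 4) :
    (pauliTensor f)ᴴ = pauliTensor f := by
  ext s t
  simp only [Matrix.conjTranspose_apply, pauliTensor, star_prod, pauli1_herm]

lemma prod_delta {N : ℕ} (s t : Fin N → Fin 2) (c : Fin N → ℂ) :
    ∏ n, (if s n = t n then c n else 0) = if s = t then ∏ n, c n else 0 := by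
  split_ifs with hst
  · subst hst; simp
  · obtain ⟨n, hn⟩ := Function.ne_iff.mp hst
    exact Finset.prod_eq_zero (Finset.mem_univ n) (by simp [hn])

lemma pauliTensor_sq {N : ℕ} (f : Fin N → Fin 4) :
    pauliTensor f * pauliTensor f = 1 := by
  ext s t
  rw [Matrix.mul_apply]
  simp only [pauliTensor, ← Finset.prod_mul_distrib]
  rw [← Fintype.prod_sum (fun n c => pauli1 (f n) (s n) c * pauli1 (f n) c (t n))]
  simp only [pauli1_sq]
  rw [prod_delta, Matrix.one_apply]
  simp

lemma pauliTensor_ne {N : ℕ} (f : Fin N → Fin 4) (S : Finset (Fin N))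
    (hf : ∀ q, q ∉ S → f q = 0) (s t : Fin N → Fin 2) (hne : pauliTensor f s t ≠ 0) :
    ∀ q, q ∉ S → s q = t q := by
  intro q hq
  by_contra hst
  apply hne
  refine Finset.prod_eq_zero (Finset.mem_univ q) ?_
  rw [hf q hq, pauli1_zero, if_neg hst]

lemma pauliTensor_tens {N : ℕ} (f : Fin N → Fin 4) (S : Finset (Fin N))
    (hf : ∀ q, q ∉ S → f q = 0) (u w : (Fin N → Fin 2) → ℂ) :
    (pauliTensor f).mulVec (tens S u w) = tens S ((pauliTensor f).mulVec u) w := by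
  funext s
  simp only [Matrix.mulVec, dotProduct, tens, Finset.sum_mul]
  refine Finset.sum_bij_ne_zero (fun t _ _ => mask S t) (fun _ _ _ => Finset.mem_univ _) ?_ ?_ ?_
  · intro t _ ht t' _ ht' heq
    have h1 := pauliTensor_ne f S hf s t (left_ne_zero_of_mul ht)
    have h2 := pauliTensor_ne f S hf s t' (left_ne_zero_of_mul ht')
    funext q
    by_cases hq : q ∈ S
    · simpa [mask, hq] using congrFun heq q
    · rw [← h1 q hq, ← h2 q hq]
  · intro t _ ht
    have h1 := pauliTensor_ne f S hf _ t (left_ne_zero_of_mul (left_ne_zero_of_mul ht))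
    have hm : mask S (fun q => if q ∈ S then t q else s q) = t := by
      funext q
      by_cases hq : q ∈ S
      · simp [mask, hq]
      · simpa [mask, hq] using h1 q hq
    have hm2 : mask Sᶜ (fun q => if q ∈ S then t q else s q) = mask Sᶜ s := by
      funext q
      by_cases hq : q ∈ S <;> simp [mask, hq]
    refine ⟨fun q => if q ∈ S then t q else s q, Finset.mem_univ _, ?_, hm⟩
    rw [hm, hm2, ← mul_assoc]
    convert ht using 3
    simp only [pauliTensor]
    refine Finset.prod_congr rfl fun q _ => ?_
    by_cases hq : q ∈ S
    · simp [mask, hq]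
    · have := h1 q hq
      simp only [mask, hq, if_false] at this ⊢
      rw [← this, hf q hq]; simp [pauli1_zero]
  · intro t _ ht
    have h1 := pauliTensor_ne f S hf s t (left_ne_zero_of_mul ht)
    have hm2 : mask Sᶜ t = mask Sᶜ s := by
      funext q
      by_cases hq : q ∈ S
      · simp [mask, hq]
      · simp [mask, hq, h1 q hq]
    rw [hm2, ← mul_assoc]
    congr 2
    simp only [pauliTensor]
    refine Finset.prod_congr rfl fun q _ => ?_
    by_cases hq : q ∈ S
    · simp [mask, hq]
    · simp only [mask, hq, if_false]
      rw [h1 q hq, hf q hq]; simp [pauli1_zero]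

lemma pauliTensor_tens_right {N : ℕ} (f : Fin N → Fin 4) (S : Finset (Fin N))
    (hf : ∀ q, q ∈ S → f q = 0) (u w : (Fin N → Fin 2) → ℂ) :
    (pauliTensor f).mulVec (tens S u w) = tens S u ((pauliTensor f).mulVec w) := by
  rw [tens_comm, pauliTensor_tens f Sᶜ (by simpa using hf), tens_comm S]

/-- Diagonal energies of `H_0`. -/
noncomputable def en {N : ℕ} (h : Fin N → ℝ) (s : Fin N → Fin 2) : ℝ :=
  -∑ n, h n * (if s n = 0 then 1 else -1)

/-- The Hamiltonian. -/
noncomputable def Hm {Nq Nc : ℕ} (h : Fin Nq → ℝ) (Vf : Fin Nc → Fin Nq → Fin 4)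
    (J : Fin Nc → ℝ) : Matrix (Fin Nq → Fin 2) (Fin Nq → Fin 2) ℂ :=
  (-∑ n : Fin Nq, ((h n : ℝ) : ℂ) • pauliTensor (fun q => if q = n then (3 : Fin 4) else 0)) +
        ∑ i : Fin Nc, ((J i : ℝ) : ℂ) • pauliTensor (Vf i)

lemma Hm_herm {Nq Nc : ℕ} (h : Fin Nq → ℝ) (Vf : Fin Nc → Fin Nq → Fin 4)
    (J : Fin Nc → ℝ) : (Hm h Vf J)ᴴ = Hm h Vf J := by
  simp [Hm, Matrix.conjTranspose_add, Matrix.conjTranspose_neg, Matrix.conjTranspose_sum,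
    Matrix.conjTranspose_smul, pauliTensor_herm]

lemma pauliZ {N : ℕ} (n : Fin N) :
    pauliTensor (fun q => if q = n then (3 : Fin 4) else 0)
      = Matrix.diagonal (fun s : Fin N → Fin 2 => if s n = 0 then (1 : ℂ) else -1) := by
  ext s t
  have : ∀ q, pauli1 (if q = n then (3 : Fin 4) else 0) (s q) (t q)
      = if s q = t q then (if q = n then (if s n = 0 then (1 : ℂ) else -1) else 1) else 0 := by
    intro q
    by_cases hq : q = n
    · subst hq; simp [pauli1_three]
    · simp [hq, pauli1_zero]
  simp only [pauliTensor, this]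
  rw [prod_delta, Matrix.diagonal_apply]
  simp

lemma H0_eq {N : ℕ} (h : Fin N → ℝ) :
    (-∑ n : Fin N, ((h n : ℝ) : ℂ) • pauliTensor (fun q => if q = n then (3 : Fin 4) else 0))
      = Matrix.diagonal (fun s => ((en h s : ℝ) : ℂ)) := by
  simp only [pauliZ]
  ext s t
  simp only [Matrix.neg_apply, Matrix.sum_apply, Matrix.smul_apply, Matrix.diagonal_apply, en]
  split_ifs with hst
  · push_cast
    congr 1
    refine Finset.sum_congr rfl fun n _ => ?_
    split_ifs <;> simp
  · simp

lemma Hm_mulVec {Nq Nc : ℕ} (h : Fin Nq → ℝ) (Vf : Fin Nc → Fin Nq → Fin 4)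
    (J : Fin Nc → ℝ) (v : (Fin Nq → Fin 2) → ℂ) (s : Fin Nq → Fin 2) :
    (Hm h Vf J).mulVec v s = (en h s : ℂ) * v s
      + ∑ i, (J i : ℂ) * (pauliTensor (Vf i)).mulVec v s := by
  rw [Hm, H0_eq, Matrix.add_mulVec, Pi.add_apply, Matrix.mulVec_diagonal, Matrix.sum_mulVec,
    Finset.sum_apply]
  simp [Matrix.smul_mulVec]

lemma en_mask {N : ℕ} (h : Fin N → ℝ) (S : Finset (Fin N)) (s : Fin N → Fin 2) :
    en h s = en h (mask S s) + en h (mask Sᶜ s) - en h (fun _ => 0) := by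
  simp only [en, ← Finset.sum_neg_distrib, ← Finset.sum_add_distrib, ← Finset.sum_sub_distrib]
  refine Finset.sum_congr rfl fun q _ => ?_
  by_cases hq : q ∈ S <;> simp [mask, hq]

lemma en_gap {N : ℕ} (h : Fin N → ℝ) (hpos : ∀ n, 0 < h n) (s : Fin N → Fin 2)
    (hs : s ≠ fun _ => 0) : en h (fun _ => 0) < en h s := by
  simp only [en, neg_lt_neg_iff]
  obtain ⟨n, hn⟩ := Function.ne_iff.mp hs
  refine Finset.sum_lt_sum (fun q _ => ?_) ⟨n, Finset.mem_univ _, ?_⟩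
  · have := hpos q
    by_cases hq : s q = 0
    · simp [hq]
    · simp [hq]; linarith
  · have := hpos n
    simp [hn]; linarith

lemma Hm_tens {Nq Nc : ℕ} (h : Fin Nq → ℝ) (Vf : Fin Nc → Fin Nq → Fin 4) (S : Finset (Fin Nq))
    (x y : Fin Nc → ℝ) (hx : ∀ i, x i ≠ 0 → ∀ q, q ∉ S → Vf i q = 0)
    (hy : ∀ i, y i ≠ 0 → ∀ q, q ∈ S → Vf i q = 0) (u w : (Fin Nq → Fin 2) → ℂ) (a b : ℝ)
    (hu : (Hm h Vf x).mulVec u = (a : ℂ) • u) (hw : (Hm h Vf y).mulVec w = (b : ℂ) • w) :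
    (Hm h Vf (x + y)).mulVec (tens S u w)
      = ((a + b - en h (fun _ => 0) : ℝ) : ℂ) • tens S u w := by
  funext s
  have hu' := congrFun hu (mask S s)
  have hw' := congrFun hw (mask Sᶜ s)
  rw [Hm_mulVec] at hu' hw' ⊢
  simp only [Pi.smul_apply, smul_eq_mul] at hu' hw' ⊢
  have hsum : ∑ i, (((x + y) i : ℝ) : ℂ) * (pauliTensor (Vf i)).mulVec (tens S u w) s
      = (∑ i, (x i : ℂ) * (pauliTensor (Vf i)).mulVec u (mask S s)) * w (mask Sᶜ s)
      + u (mask S s) * ∑ i, (y i : ℂ) * (pauliTensor (Vf i)).mulVec w (mask Sᶜ s) := by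
    rw [Finset.sum_mul, Finset.mul_sum, ← Finset.sum_add_distrib]
    refine Finset.sum_congr rfl fun i _ => ?_
    have h1 : (x i : ℂ) * (pauliTensor (Vf i)).mulVec (tens S u w) s
        = (x i : ℂ) * (pauliTensor (Vf i)).mulVec u (mask S s) * w (mask Sᶜ s) := by
      by_cases hi : x i = 0
      · simp [hi]
      · rw [pauliTensor_tens _ S (hx i hi)]; simp [tens, mul_assoc]
    have h2 : (y i : ℂ) * (pauliTensor (Vf i)).mulVec (tens S u w) s
        = u (mask S s) * ((y i : ℂ) * (pauliTensor (Vf i)).mulVec w (mask Sᶜ s)) := by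
      by_cases hi : y i = 0
      · simp [hi]
      · rw [pauliTensor_tens_right _ S (hy i hi)]; simp only [tens]; ring
    rw [Pi.add_apply, Complex.ofReal_add, add_mul, h1, h2]
  rw [hsum, en_mask h S s]
  simp only [tens]
  push_cast
  linear_combination w (mask Sᶜ s) * hu' + u (mask S s) * hw'

lemma eig_orth {Nq Nc : ℕ} (h : Fin Nq → ℝ) (Vf : Fin Nc → Fin Nq → Fin 4)
    (J : Fin Nc → ℝ) (u w : (Fin Nq → Fin 2) → ℂ) (a b : ℝ)
    (hu : (Hm h Vf J).mulVec u = (a : ℂ) • u) (hw : (Hm h Vf J).mulVec w = (b : ℂ) • w)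
    (hne : star u ⬝ᵥ w ≠ 0) : a = b := by
  have h1 : star u ⬝ᵥ ((Hm h Vf J).mulVec w) = star ((Hm h Vf J).mulVec u) ⬝ᵥ w := by
    rw [Matrix.dotProduct_mulVec, Matrix.star_mulVec, Hm_herm]
  rw [hu, hw] at h1
  simp only [dotProduct_smul, star_smul, smul_dotProduct, smul_eq_mul] at h1
  have h2 := mul_right_cancel₀ hne h1
  simpa using h2.symm

open Topology Filter

/-- Regularised resolvent matrix. -/
noncomputable def Mm {Nq Nc : ℕ} (h : Fin Nq → ℝ) (Vf : Fin Nc → Fin Nq → Fin 4)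
    (E : (Fin Nc → ℝ) → ℝ) (J : Fin Nc → ℝ) : Matrix (Fin Nq → Fin 2) (Fin Nq → Fin 2) ℂ :=
  Hm h Vf J - ((E J : ℝ) : ℂ) • (1 : Matrix (Fin Nq → Fin 2) (Fin Nq → Fin 2) ℂ)
    + Matrix.diagonal (ket (fun _ => 0))

lemma Mm_det {Nq Nc : ℕ} (h : Fin Nq → ℝ) (hpos : ∀ n, 0 < h n)
    (Vf : Fin Nc → Fin Nq → Fin 4) (E : (Fin Nc → ℝ) → ℝ)
    (hE : ContinuousAt E 0) (hE0 : E 0 = en h (fun _ => 0)) :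
    ∀ᶠ J in 𝓝 (0 : Fin Nc → ℝ), (Mm h Vf E J).det ≠ 0 := by
  have hc : ContinuousAt (fun J => (Mm h Vf E J).det) 0 := by
    have h1 : ContinuousAt (fun J => Mm h Vf E J) 0 := by
      unfold Mm Hm
      have h2 : ContinuousAt (fun J => ((E J : ℝ) : ℂ)) 0 :=
        Complex.continuous_ofReal.continuousAt.comp hE
      have h3 : Continuous fun J : Fin Nc → ℝ =>
          ∑ i : Fin Nc, ((J i : ℝ) : ℂ) • pauliTensor (Vf i) := by
        refine continuous_finsetSum _ fun i _ => ?_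
        exact (Complex.continuous_ofReal.comp (continuous_apply i)).smul continuous_const
      exact ((continuousAt_const.add h3.continuousAt).sub (h2.smul continuousAt_const)).add
        continuousAt_const
    exact (Continuous.matrix_det continuous_id).continuousAt.comp h1
  refine hc.eventually_ne ?_
  have : Mm h Vf E 0 = Matrix.diagonal (fun s => ((en h s - en h (fun _ => 0) : ℝ) : ℂ)
      + ket (fun _ => 0) s) := by
    rw [Mm, Hm, H0_eq, hE0]
    ext s t
    by_cases hst : s = t <;> simp [Matrix.diagonal_apply, hst, Matrix.one_apply]
  rw [this, Matrix.det_diagonal, Finset.prod_ne_zero_iff]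
  intro s _
  by_cases hs : s = fun _ => 0
  · simp [hs, ket]
  · have := en_gap h hpos s hs
    simp only [ket, hs, if_false, add_zero]
    rw [Complex.ofReal_ne_zero]
    linarith

/-- Nondegeneracy. -/
lemma eig_unique {Nq Nc : ℕ} (h : Fin Nq → ℝ) (Vf : Fin Nc → Fin Nq → Fin 4)
    (E : (Fin Nc → ℝ) → ℝ) (J : Fin Nc → ℝ) (hdet : (Mm h Vf E J).det ≠ 0)
    (u w : (Fin Nq → Fin 2) → ℂ)
    (hu : (Hm h Vf J).mulVec u = (E J : ℂ) • u) (hw : (Hm h Vf J).mulVec w = (E J : ℂ) • w) :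
    w (fun _ => 0) • u = u (fun _ => 0) • w := by
  rw [← sub_eq_zero]
  refine Matrix.eq_zero_of_mulVec_eq_zero hdet ?_
  rw [Mm, Matrix.add_mulVec, Matrix.sub_mulVec, Matrix.mulVec_sub, Matrix.mulVec_smul,
    Matrix.mulVec_smul, hu, hw]
  funext s
  simp only [Pi.add_apply, Pi.sub_apply, Pi.smul_apply, Matrix.mulVec_diagonal, smul_eq_mul,
    Matrix.smul_mulVec, Matrix.one_mulVec, Pi.zero_apply, ket]
  by_cases hs : s = fun _ => 0
  · simp only [hs, if_true]; ring
  · simp only [hs, if_false]; ring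

lemma tens_ket {N : ℕ} (S : Finset (Fin N)) :
    tens S (ket (fun _ => 0)) (ket (fun _ => 0)) = ket (fun _ => 0) := by
  funext s
  have : s = (fun _ => 0) ↔ mask S s = (fun _ => 0) ∧ mask Sᶜ s = (fun _ => 0) := by
    constructor
    · rintro rfl; exact ⟨mask_zero _, mask_zero _⟩
    · rintro ⟨h1, h2⟩
      funext q
      by_cases hq : q ∈ S
      · simpa [mask, hq] using congrFun h1 q
      · simpa [mask, hq] using congrFun h2 q
  simp only [tens, ket, this]
  by_cases h1 : mask S s = (fun _ => 0) <;> simp [h1]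

lemma tens_normSq {N : ℕ} (S : Finset (Fin N)) (u w : (Fin N → Fin 2) → ℂ)
    (hu : u = tens S u (ket (fun _ => 0))) (hw : w = tens S (ket (fun _ => 0)) w) :
    ∑ s, Complex.normSq (tens S u w s)
      = (∑ s, Complex.normSq (u s)) * ∑ s, Complex.normSq (w s) := by
  have hu' : ∀ s, u s ≠ 0 → mask Sᶜ s = fun _ => 0 := by
    intro s hs
    rw [hu] at hs
    by_contra hc
    apply hs
    simp [tens, ket, hc]
  have hw' : ∀ s, w s ≠ 0 → mask S s = fun _ => 0 := by
    intro s hs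
    rw [hw] at hs
    by_contra hc
    apply hs
    simp [tens, ket, hc]
  rw [Fintype.sum_mul_sum, ← Fintype.sum_prod_type']
  refine Finset.sum_bij_ne_zero (fun s _ _ => (mask S s, mask Sᶜ s)) (fun _ _ _ => by simp) ?_ ?_ ?_
  · intro s _ _ t _ _ heq
    simp only [Prod.mk.injEq] at heq
    funext q
    by_cases hq : q ∈ S
    · simpa [mask, hq] using congrFun heq.1 q
    · simpa [mask, hq] using congrFun heq.2 q
  · rintro ⟨s, t⟩ _ hst
    have h1 := hu' s (by rintro h0; simp [h0] at hst)
    have h2 := hw' t (by rintro h0; simp [h0] at hst)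
    have h3 : mask S (fun q => if q ∈ S then s q else t q) = s := by
      funext q
      by_cases hq : q ∈ S
      · simp [mask, hq]
      · simpa [mask, hq] using (congrFun h1 q).symm
    have h4 : mask Sᶜ (fun q => if q ∈ S then s q else t q) = t := by
      funext q
      by_cases hq : q ∈ S
      · simpa [mask, hq] using (congrFun h2 q).symm
      · simp [mask, hq]
    refine ⟨fun q => if q ∈ S then s q else t q, by simp, ?_, ?_⟩
    · simpa [tens, h3, h4] using hst
    · rw [h3, h4]
  · intro s _ _
    simp [tens]

/-- Local factorization of the ground state. -/
lemma factor {Nq Nc : ℕ}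
    (h : Fin Nq → ℝ) (hpos : ∀ n, 0 < h n)
    (Vf : Fin Nc → Fin Nq → Fin 4)
    (Ψ : (Fin Nc → ℝ) → (Fin Nq → Fin 2) → ℂ)
    (E : (Fin Nc → ℝ) → ℝ)
    (Unb : Set (Fin Nc → ℝ)) (hUnb : Unb ∈ nhds (0 : Fin Nc → ℝ))
    (hΨc : ContinuousAt Ψ 0) (hEc : ContinuousAt E 0)
    (heig : ∀ J ∈ Unb, (Hm h Vf J).mulVec (Ψ J) = ((E J : ℝ) : ℂ) • Ψ J)
    (hnorm : ∀ J ∈ Unb, (∑ x, Complex.normSq (Ψ J x)) = 1)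
    (hreal : ∀ J ∈ Unb, (Ψ J (fun _ => 0)).im = 0 ∧ 0 < (Ψ J (fun _ => 0)).re)
    (hΨ0 : Ψ 0 = ket (fun _ => 0)) (S : Finset (Fin Nq)) :
    ∀ᶠ p : (Fin Nc → ℝ) × (Fin Nc → ℝ) in 𝓝 (0, 0),
      (∀ i, p.1 i ≠ 0 → ∀ q, q ∉ S → Vf i q = 0) →
      (∀ i, p.2 i ≠ 0 → ∀ q, q ∈ S → Vf i q = 0) →
      Ψ (p.1 + p.2) = tens S (Ψ p.1) (Ψ p.2) ∧ Ψ p.1 = tens S (Ψ p.1) (ket (fun _ => 0)) := by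
  have h0U : (0 : Fin Nc → ℝ) ∈ Unb := mem_of_mem_nhds hUnb
  have hE0 : E 0 = en h (fun _ => 0) := by
    have h1 := congrFun (heig 0 h0U) (fun _ => 0)
    rw [Hm_mulVec, hΨ0] at h1
    simp [ket] at h1
    exact_mod_cast h1.symm
  have hz : ∀ J ∈ Unb, Ψ J (fun _ => 0) ≠ 0 := by
    intro J hJ h0
    have := (hreal J hJ).2
    simp [h0] at this
  set X := (Fin Nc → ℝ) × (Fin Nc → ℝ)
  have t1 : Tendsto (fun p : X => p.1) (𝓝 (0, 0)) (𝓝 0) := continuous_fst.tendsto' _ _ rfl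
  have t2 : Tendsto (fun p : X => p.2) (𝓝 (0, 0)) (𝓝 0) := continuous_snd.tendsto' _ _ rfl
  have t3 : Tendsto (fun p : X => p.1 + p.2) (𝓝 (0, 0)) (𝓝 0) := by
    simpa using t1.add t2
  have t10 : Tendsto (fun p : X => (p.1, (0 : Fin Nc → ℝ))) (𝓝 (0, 0)) (𝓝 (0, 0)) :=
    t1.prodMk_nhds tendsto_const_nhds
  have t02 : Tendsto (fun p : X => ((0 : Fin Nc → ℝ), p.2)) (𝓝 (0, 0)) (𝓝 (0, 0)) :=
    tendsto_const_nhds.prodMk_nhds t2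
  have hdet := t3.eventually (Mm_det h hpos Vf E hEc hE0)
  -- overlap
  have hov : ∀ᶠ p : X in 𝓝 (0, 0), star (Ψ (p.1 + p.2)) ⬝ᵥ tens S (Ψ p.1) (Ψ p.2) ≠ 0 := by
    have c1 : Tendsto (fun p : X => Ψ p.1) (𝓝 (0, 0)) (𝓝 (Ψ 0)) := hΨc.tendsto.comp t1
    have c2 : Tendsto (fun p : X => Ψ p.2) (𝓝 (0, 0)) (𝓝 (Ψ 0)) := hΨc.tendsto.comp t2
    have c3 : Tendsto (fun p : X => Ψ (p.1 + p.2)) (𝓝 (0, 0)) (𝓝 (Ψ 0)) := hΨc.tendsto.comp t3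
    have c4 : Tendsto (fun p : X => star (Ψ (p.1 + p.2)) ⬝ᵥ tens S (Ψ p.1) (Ψ p.2)) (𝓝 (0, 0))
        (𝓝 (star (Ψ 0) ⬝ᵥ tens S (Ψ 0) (Ψ 0))) := by
      refine tendsto_finsetSum _ fun s _ => ?_
      refine Tendsto.mul ((tendsto_pi_nhds.mp c3 s).star) ?_
      exact (tendsto_pi_nhds.mp c1 _).mul (tendsto_pi_nhds.mp c2 _)
    refine c4.eventually_ne ?_
    rw [hΨ0, tens_ket]
    simp [dotProduct, ket]
  -- proportionality
  have hprop : ∀ᶠ p : X in 𝓝 (0, 0),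
      (∀ i, p.1 i ≠ 0 → ∀ q, q ∉ S → Vf i q = 0) →
      (∀ i, p.2 i ≠ 0 → ∀ q, q ∈ S → Vf i q = 0) →
      (Ψ p.1 (fun _ => 0) * Ψ p.2 (fun _ => 0)) • Ψ (p.1 + p.2)
        = Ψ (p.1 + p.2) (fun _ => 0) • tens S (Ψ p.1) (Ψ p.2) := by
    filter_upwards [hdet, hov, t1.eventually hUnb, t2.eventually hUnb, t3.eventually hUnb]
      with p hd ho hp1 hp2 hp3 hx hy
    have e1 := Hm_tens h Vf S p.1 p.2 hx hy _ _ _ _ (heig _ hp1) (heig _ hp2)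
    have e2 := eig_orth h Vf _ _ _ _ _ (heig _ hp3) e1 ho
    rw [← e2] at e1
    have := eig_unique h Vf E _ hd _ _ (heig _ hp3) e1
    simpa [tens, mask_zero] using this
  filter_upwards [hprop, t10.eventually hprop, t02.eventually hprop, t1.eventually hUnb,
    t2.eventually hUnb, t3.eventually hUnb] with p h12 h10 h02 hp1 hp2 hp3 hx hy
  have g1 := h10 hx (by simp)
  have g2 := h02 (by simp) hy
  have g3 := h12 hx hy
  simp only [add_zero, zero_add, hΨ0] at g1 g2
  have k0 : (ket (fun _ => 0) : (Fin Nq → Fin 2) → ℂ) (fun _ => 0) = 1 := by simp [ket]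
  rw [k0, mul_one] at g1
  rw [k0, one_mul] at g2
  have g1' := smul_right_injective _ (hz _ hp1) g1
  have g2' := smul_right_injective _ (hz _ hp2) g2
  refine ⟨?_, g1'⟩
  have hn := tens_normSq S _ _ g1' g2'
  rw [hnorm _ hp1, hnorm _ hp2, mul_one] at hn
  -- write amplitudes as positive reals
  obtain ⟨i1, r1⟩ := hreal _ hp1
  obtain ⟨i2, r2⟩ := hreal _ hp2
  obtain ⟨i3, r3⟩ := hreal _ hp3
  set a := (Ψ p.1 (fun _ => 0)).re with ha
  set b := (Ψ p.2 (fun _ => 0)).re with hb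
  set c := (Ψ (p.1 + p.2) (fun _ => 0)).re with hcc
  have za : Ψ p.1 (fun _ => 0) = (a : ℂ) := Complex.ext (by simp [ha]) (by simp [i1])
  have zb : Ψ p.2 (fun _ => 0) = (b : ℂ) := Complex.ext (by simp [hb]) (by simp [i2])
  have zc : Ψ (p.1 + p.2) (fun _ => 0) = (c : ℂ) := Complex.ext (by simp [hcc]) (by simp [i3])
  rw [za, zb, zc] at g3
  have key : (a * b) * (a * b) = c * c := by
    have e1 : ∑ s, Complex.normSq ((((a : ℂ) * b) • Ψ (p.1 + p.2)) s) = (a * b) * (a * b) := by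
      simp only [Pi.smul_apply, smul_eq_mul, Complex.normSq_mul, Complex.normSq_ofReal,
        ← Finset.mul_sum, hnorm _ hp3]
      ring
    have e2 : ∑ s, Complex.normSq (((c : ℂ) • tens S (Ψ p.1) (Ψ p.2)) s) = c * c := by
      simp only [Pi.smul_apply, smul_eq_mul, Complex.normSq_mul, Complex.normSq_ofReal,
        ← Finset.mul_sum, hn]
      ring
    rw [← e1, ← e2, g3]
  have hab : a * b = c := by
    have := mul_pos r1 r2
    nlinarith
  rw [← Complex.ofReal_mul, hab] at g3
  exact smul_right_injective _ (Complex.ofReal_ne_zero.mpr r3.ne') g3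

/-- `F (x + y) = G x ⊗ H y` locally, for `x`, `y` supported on `A`, `B`. -/
def Fac {n : ℕ} {ι : Type} (A B : Fin n → Prop) (α β : ι → ι)
    (F G H : (Fin n → ℝ) → ι → ℂ) : Prop :=
  ∀ᶠ p : (Fin n → ℝ) × (Fin n → ℝ) in 𝓝 (0, 0),
    (∀ i, p.1 i ≠ 0 → A i) → (∀ i, p.2 i ≠ 0 → B i) →
      ∀ s, F (p.1 + p.2) s = G p.1 (α s) * H p.2 (β s)

lemma pderiv_analytic {n : ℕ} {ι : Type} [Fintype ι] (i : Fin n) (F : (Fin n → ℝ) → ι → ℂ)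
    (hF : AnalyticAt ℝ F 0) : AnalyticAt ℝ (pderiv i F) 0 := by
  have h1 := hF.fderiv
  exact (ContinuousLinearMap.analyticAt
    (ContinuousLinearMap.apply ℝ (ι → ℂ) (Pi.single i 1 : Fin n → ℝ)) _).comp h1

lemma pderiv_hasDerivAt {n : ℕ} {ι : Type} [Fintype ι] (i : Fin n) (F : (Fin n → ℝ) → ι → ℂ)
    (x : Fin n → ℝ) (hF : DifferentiableAt ℝ F x) (s : ι) :
    HasDerivAt (fun t : ℝ => F (x + t • (Pi.single i 1 : Fin n → ℝ)) s) (pderiv i F x s) 0 := by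
  have h1 := hF.hasFDerivAt.hasLineDerivAt (Pi.single i 1 : Fin n → ℝ)
  exact (hasDerivAt_pi.mp h1) s

lemma Fac.left {n : ℕ} {ι : Type} [Fintype ι] {A B : Fin n → Prop} {α β : ι → ι}
    {F G H : (Fin n → ℝ) → ι → ℂ} (hfac : Fac A B α β F G H) (hF : AnalyticAt ℝ F 0)
    (hG : AnalyticAt ℝ G 0) (i : Fin n) (hi : A i) :
    Fac A B α β (pderiv i F) (pderiv i G) H := by
  have t1 : Tendsto (fun p : (Fin n → ℝ) × (Fin n → ℝ) => p.1) (𝓝 (0, 0)) (𝓝 0) :=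
    continuous_fst.tendsto' _ _ rfl
  have t2 : Tendsto (fun p : (Fin n → ℝ) × (Fin n → ℝ) => p.2) (𝓝 (0, 0)) (𝓝 0) :=
    continuous_snd.tendsto' _ _ rfl
  have t3 : Tendsto (fun p : (Fin n → ℝ) × (Fin n → ℝ) => p.1 + p.2) (𝓝 (0, 0)) (𝓝 0) := by
    simpa using t1.add t2
  filter_upwards [eventually_eventually_nhds.mpr hfac, t3.eventually hF.eventually_analyticAt,
    t1.eventually hG.eventually_analyticAt] with p hp hFp hGp hx hy s
  have tc : Tendsto (fun t : ℝ => (p.1 + t • (Pi.single i 1 : Fin n → ℝ), p.2)) (𝓝 0) (𝓝 p) := by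
    refine Continuous.tendsto' (by fun_prop) _ _ (by simp)
  have d1 := pderiv_hasDerivAt i F (p.1 + p.2) hFp.differentiableAt s
  have d2 := (pderiv_hasDerivAt i G p.1 hGp.differentiableAt (α s)).mul_const (H p.2 (β s))
  refine d1.unique (d2.congr_of_eventuallyEq ?_)
  filter_upwards [tc.eventually hp] with t ht
  have := ht (fun j hj => ?_) hy s
  · rw [← this, add_right_comm]
  · by_cases hji : j = i
    · exact hji ▸ hi
    · exact hx j (by simpa [Pi.single_apply, hji] using hj)

lemma Fac.swap {n : ℕ} {ι : Type} {A B : Fin n → Prop} {α β : ι → ι}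
    {F G H : (Fin n → ℝ) → ι → ℂ} (hfac : Fac A B α β F G H) : Fac B A β α F H G := by
  have t : Tendsto (Prod.swap : (Fin n → ℝ) × (Fin n → ℝ) → _) (𝓝 (0, 0)) (𝓝 (0, 0)) :=
    continuous_swap.tendsto' _ _ rfl
  filter_upwards [t.eventually hfac] with p hp hx hy s
  rw [add_comm, mul_comm]
  exact hp hy hx s

lemma iter_analytic {n : ℕ} {ι : Type} [Fintype ι] (i : Fin n) (m : ℕ)
    (F : (Fin n → ℝ) → ι → ℂ) (hF : AnalyticAt ℝ F 0) :
    AnalyticAt ℝ ((pderiv i)^[m] F) 0 := by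
  induction m with
  | zero => exact hF
  | succ m ih => rw [Function.iterate_succ_apply']; exact pderiv_analytic i _ ih

lemma Fac.iter_left {n : ℕ} {ι : Type} [Fintype ι] {A B : Fin n → Prop} {α β : ι → ι}
    {F G H : (Fin n → ℝ) → ι → ℂ} (hfac : Fac A B α β F G H) (hF : AnalyticAt ℝ F 0)
    (hG : AnalyticAt ℝ G 0) (i : Fin n) (m : ℕ) (hi : m ≠ 0 → A i) :
    Fac A B α β ((pderiv i)^[m] F) ((pderiv i)^[m] G) H := by
  induction m with
  | zero => exact hfac
  | succ m ih =>
    rw [Function.iterate_succ_apply', Function.iterate_succ_apply']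
    exact (ih fun _ => hi (by simp)).left (iter_analytic i m F hF) (iter_analytic i m G hG) i
      (hi (by simp))

lemma Fac.foldr {n : ℕ} {ι : Type} [Fintype ι] {A B : Fin n → Prop} {α β : ι → ι}
    {F G H : (Fin n → ℝ) → ι → ℂ} (hfac : Fac A B α β F G H) (hF : AnalyticAt ℝ F 0)
    (hG : AnalyticAt ℝ G 0) (hH : AnalyticAt ℝ H 0) (kA kB : Fin n → ℕ)
    (hA : ∀ i, kA i ≠ 0 → A i) (hB : ∀ i, kB i ≠ 0 → B i) (l : List (Fin n)) :
    Fac A B α β (l.foldr (fun i G => (pderiv i)^[(kA + kB) i] G) F)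
      (l.foldr (fun i G => (pderiv i)^[kA i] G) G) (l.foldr (fun i G => (pderiv i)^[kB i] G) H) ∧
    AnalyticAt ℝ (l.foldr (fun i G => (pderiv i)^[(kA + kB) i] G) F) 0 ∧
    AnalyticAt ℝ (l.foldr (fun i G => (pderiv i)^[kA i] G) G) 0 ∧
    AnalyticAt ℝ (l.foldr (fun i G => (pderiv i)^[kB i] G) H) 0 := by
  induction l with
  | nil => exact ⟨hfac, hF, hG, hH⟩
  | cons i l ih =>
    obtain ⟨h1, h2, h3, h4⟩ := ih
    simp only [List.foldr_cons]
    refine ⟨?_, iter_analytic _ _ _ h2, iter_analytic _ _ _ h3, iter_analytic _ _ _ h4⟩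
    rw [Pi.add_apply, Function.iterate_add_apply]
    have f1 := (h1.swap.iter_left h2 h4 i (kB i) (hB i)).swap
    exact f1.iter_left (iter_analytic _ _ _ h2) h3 i (kA i) (hA i)

lemma Fac.main {n : ℕ} {ι : Type} [Fintype ι] {A B : Fin n → Prop} {α β : ι → ι}
    {F G H : (Fin n → ℝ) → ι → ℂ} (hfac : Fac A B α β F G H) (hF : AnalyticAt ℝ F 0)
    (hG : AnalyticAt ℝ G 0) (hH : AnalyticAt ℝ H 0) (kA kB : Fin n → ℕ)
    (hA : ∀ i, kA i ≠ 0 → A i) (hB : ∀ i, kB i ≠ 0 → B i) (s : ι) :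
    iterPDeriv (kA + kB) F 0 s = iterPDeriv kA G 0 (α s) * iterPDeriv kB H 0 (β s) := by
  have h1 := (hfac.foldr hF hG hH kA kB hA hB (List.finRange n)).1.self_of_nhds
    (by simp) (by simp) s
  simpa [iterPDeriv] using h1

lemma pderiv_const {n : ℕ} {ι : Type} [Fintype ι] (i : Fin n) (c : ι → ℂ) :
    pderiv i (fun _ : Fin n → ℝ => c) = fun _ => 0 := by
  funext J
  simp [pderiv]

lemma iter_const {n : ℕ} {ι : Type} [Fintype ι] (i : Fin n) (m : ℕ) (c : ι → ℂ) :
    ∃ c', (pderiv i)^[m] (fun _ : Fin n → ℝ => c) = (fun _ => c') ∧ (c = 0 ∨ m ≠ 0 → c' = 0) := by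
  induction m with
  | zero => exact ⟨c, rfl, by simp⟩
  | succ m ih =>
    obtain ⟨c', h1, h2⟩ := ih
    exact ⟨0, by rw [Function.iterate_succ_apply', h1, pderiv_const], fun _ => rfl⟩

lemma iterPDeriv_const {n : ℕ} {ι : Type} [Fintype ι] (k : Fin n → ℕ) (c : ι → ℂ)
    (i : Fin n) (hi : k i ≠ 0) : iterPDeriv k (fun _ : Fin n → ℝ => c) 0 = 0 := by
  have : ∀ l : List (Fin n), ∃ c', l.foldr (fun i G => (pderiv i)^[k i] G)
      (fun _ : Fin n → ℝ => c) = (fun _ => c') ∧ (i ∈ l → c' = 0) := by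
    intro l
    induction l with
    | nil => exact ⟨c, rfl, by simp⟩
    | cons j l ih =>
      obtain ⟨c', h1, h2⟩ := ih
      obtain ⟨c'', h3, h4⟩ := iter_const j (k j) c'
      refine ⟨c'', by rw [List.foldr_cons, h1, h3], fun hm => h4 ?_⟩
      rcases List.mem_cons.mp hm with rfl | hm
      · exact Or.inr hi
      · exact Or.inl (h2 hm)
  obtain ⟨c', h1, h2⟩ := this (List.finRange n)
  rw [iterPDeriv, h1, h2 (List.mem_finRange i)]

lemma pow_tens {N : ℕ} (f : Fin N → Fin 4) (S : Finset (Fin N)) (a b : ℕ)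
    (ha : a ≠ 0 → ∀ q, q ∉ S → f q = 0) (hb : b ≠ 0 → ∀ q, q ∈ S → f q = 0)
    (u w : (Fin N → Fin 2) → ℂ) :
    (pauliTensor f ^ (a + b)).mulVec (tens S u w)
      = tens S ((pauliTensor f ^ a).mulVec u) ((pauliTensor f ^ b).mulVec w) := by
  have hr : (pauliTensor f ^ b).mulVec (tens S u w)
      = tens S u ((pauliTensor f ^ b).mulVec w) := by
    clear ha
    induction b with
    | zero => simp
    | succ b ih =>
      rw [pow_succ', ← Matrix.mulVec_mulVec, ih fun _ => hb (by simp),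
        pauliTensor_tens_right f S (hb (by simp)), Matrix.mulVec_mulVec]
  rw [pow_add, ← Matrix.mulVec_mulVec, hr]
  clear hr hb
  induction a with
  | zero => simp
  | succ a ih =>
    rw [pow_succ', ← Matrix.mulVec_mulVec, ih fun _ => ha (by simp),
      pauliTensor_tens f S (ha (by simp)), Matrix.mulVec_mulVec]

lemma Vpow_tens {Nq Nc : ℕ} (Vf : Fin Nc → Fin Nq → Fin 4) (S : Finset (Fin Nq))
    (kA kB : Fin Nc → ℕ) (hA : ∀ i, kA i ≠ 0 → ∀ q, q ∉ S → Vf i q = 0)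
    (hB : ∀ i, kB i ≠ 0 → ∀ q, q ∈ S → Vf i q = 0) (u w : (Fin Nq → Fin 2) → ℂ) :
    (Vpow (fun i => pauliTensor (Vf i)) (kA + kB)).mulVec (tens S u w)
      = tens S ((Vpow (fun i => pauliTensor (Vf i)) kA).mulVec u)
          ((Vpow (fun i => pauliTensor (Vf i)) kB).mulVec w) := by
  simp only [Vpow, List.ofFn_eq_map]
  induction List.finRange Nc with
  | nil => simp
  | cons i l ih =>
    simp only [List.map_cons, List.prod_cons, ← Matrix.mulVec_mulVec]
    rw [ih, Pi.add_apply, pow_tens _ S _ _ (hA i) (hB i)]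

lemma Vpow_ne {Nq Nc : ℕ} (Vf : Fin Nc → Fin Nq → Fin 4) (k : Fin Nc → ℕ) :
    ∃ s, (Vpow (fun i => pauliTensor (Vf i)) k).mulVec (ket (fun _ => 0)) s ≠ 0 := by
  have hu : IsUnit (Vpow (fun i => pauliTensor (Vf i)) k) := by
    simp only [Vpow, List.ofFn_eq_map]
    induction List.finRange Nc with
    | nil => simp
    | cons i l ih =>
      simp only [List.map_cons, List.prod_cons]
      exact ((IsUnit.of_mul_eq_one _ (pauliTensor_sq (Vf i))).pow _).mul ih
  by_contra! hc
  have h1 : (Vpow (fun i => pauliTensor (Vf i)) k).mulVec (ket (fun _ => 0))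
      = (Vpow (fun i => pauliTensor (Vf i)) k).mulVec 0 := by
    rw [Matrix.mulVec_zero]; funext s; exact hc s
  have h2 := congrFun (Matrix.mulVec_injective_of_isUnit hu h1) (fun _ => 0)
  simp [ket] at h2

end DCF

/-- with the perturbative coefficients `C_k` defined by
`(1/k!)∂^k_J Ψ(0) = C_k V^{·k}|0⟩`, disconnected contributions factorize:
if `k = k_A + k_B` with `k_A, k_B` nonzero multi-indices of disjoint supports
(no qubit is acted on non-trivially both by an activated `V_i` of `k_A` and by one of `k_B`),
then `C_k = C_{k_A} · C_{k_B}`. -/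
theorem disconnected_contributions_factorize {Nq Nc : ℕ} (hNq : 1 ≤ Nq) (hNc : 1 ≤ Nc)
    (h : Fin Nq → ℝ) (hpos : ∀ n, 0 < h n)
    (Vf : Fin Nc → Fin Nq → Fin 4)
    (Ψ : (Fin Nc → ℝ) → (Fin Nq → Fin 2) → ℂ)
    (E : (Fin Nc → ℝ) → ℝ)
    (Unb : Set (Fin Nc → ℝ)) (hUnb : Unb ∈ nhds (0 : Fin Nc → ℝ))
    (hΨan : ∀ J ∈ Unb, AnalyticAt ℝ Ψ J)
    (hEan : ∀ J ∈ Unb, AnalyticAt ℝ E J)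
    (heig : ∀ J ∈ Unb,
      ((-∑ n : Fin Nq, ((h n : ℝ) : ℂ) • pauliTensor (fun q => if q = n then (3 : Fin 4) else 0)) +
        ∑ i : Fin Nc, ((J i : ℝ) : ℂ) • pauliTensor (Vf i)).mulVec (Ψ J) = ((E J : ℝ) : ℂ) • Ψ J)
    (hnorm : ∀ J ∈ Unb, (∑ x, Complex.normSq (Ψ J x)) = 1)
    (hreal : ∀ J ∈ Unb, (Ψ J (fun _ => 0)).im = 0 ∧ 0 < (Ψ J (fun _ => 0)).re)
    (hΨ0 : Ψ 0 = ket (fun _ => 0))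
    (C : (Fin Nc → ℕ) → ℝ)
    (hC : ∀ k : Fin Nc → ℕ,
      (∏ i, (Nat.factorial (k i) : ℝ))⁻¹ • iterPDeriv k Ψ 0
        = ((C k : ℝ) : ℂ) • (Vpow (fun i => pauliTensor (Vf i)) k).mulVec (ket (fun _ => 0)))
    (kA kB : Fin Nc → ℕ) (hkA : kA ≠ 0) (hkB : kB ≠ 0)
    (hdisj : ∀ q : Fin Nq,
      ¬((∃ i, kA i ≠ 0 ∧ Vf i q ≠ 0) ∧ (∃ i, kB i ≠ 0 ∧ Vf i q ≠ 0))) :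
    C (kA + kB) = C kA * C kB := by
  classical
  have h0U : (0 : Fin Nc → ℝ) ∈ Unb := mem_of_mem_nhds hUnb
  have hΨa := hΨan 0 h0U
  have hfactor := DCF.factor h hpos Vf Ψ E Unb hUnb hΨa.continuousAt (hEan 0 h0U).continuousAt
    heig hnorm hreal hΨ0
  have hfac0 : ∀ k : Fin Nc → ℕ, (((∏ i, (Nat.factorial (k i) : ℝ)) : ℝ) : ℂ) ≠ 0 := by
    intro k
    rw [Complex.ofReal_ne_zero, Finset.prod_ne_zero_iff]
    intro i _
    exact_mod_cast Nat.factorial_ne_zero _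
  have hD : ∀ (k : Fin Nc → ℕ) (s : Fin Nq → Fin 2), iterPDeriv k Ψ 0 s
      = (((∏ i, (Nat.factorial (k i) : ℝ)) : ℝ) : ℂ) * ((C k : ℂ)
        * (Vpow (fun i => pauliTensor (Vf i)) k).mulVec (ket (fun _ => 0)) s) := by
    intro k s
    have h1 := congrFun (hC k) s
    simp only [Pi.smul_apply, smul_eq_mul, Complex.real_smul] at h1
    rw [← h1, Complex.ofReal_inv, mul_inv_cancel_left₀ (hfac0 k)]
  -- couplings acting as the identity do not contribute
  have hzero : ∀ (k : Fin Nc → ℕ) (i : Fin Nc), k i ≠ 0 → (∀ q, Vf i q = 0) → C k = 0 := by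
    intro k i hki hVi
    have hF : DCF.Fac (fun j => j = i) (fun _ => True) id id Ψ (fun _ _ => 1) Ψ := by
      filter_upwards [hfactor ∅, continuous_fst.continuousAt.eventually hUnb] with p hp hpU hx _ s
      obtain ⟨e1, e2⟩ := hp (fun j hj q _ => by rw [hx j hj]; exact hVi q) (by simp)
      have m1 : ∀ t : Fin Nq → Fin 2, DCF.mask ∅ t = fun _ => 0 := by
        intro t; funext q; simp [DCF.mask]
      have m2 : ∀ t : Fin Nq → Fin 2, DCF.mask ∅ᶜ t = t := by
        intro t; funext q; simp [DCF.mask]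
      have e3 : ∀ t, Ψ p.1 t = Ψ p.1 (fun _ => 0) * ket (fun _ => 0) t := by
        intro t
        have := congrFun e2 t
        rwa [DCF.tens, m1, m2] at this
      have hn := hnorm _ hpU
      rw [Finset.sum_congr rfl fun t _ => by rw [e3 t]] at hn
      obtain ⟨i1, r1⟩ := hreal _ hpU
      have hn' : (Ψ p.1 (fun _ => 0)).re * (Ψ p.1 (fun _ => 0)).re = 1 := by
        simpa [ket, Complex.normSq_apply, i1, apply_ite] using hn
      have hre : (Ψ p.1 (fun _ => 0)).re = 1 := by nlinarith
      have hz : Ψ p.1 (fun _ => 0) = 1 := Complex.ext (by simp [hre]) (by simp [i1])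
      rw [e1, DCF.tens, m1, m2, hz]
      rfl
    obtain ⟨s, hs⟩ := DCF.Vpow_ne Vf k
    have hk : Pi.single i (k i) + Function.update k i 0 = k := by
      funext j
      by_cases hj : j = i
      · subst hj; simp
      · simp [hj]
    have h1 := hF.main hΨa analyticAt_const hΨa (Pi.single i (k i)) (Function.update k i 0)
      (by
        intro j hj
        by_contra hji
        simp [hji] at hj) (by simp) s
    rw [hk, hD, DCF.iterPDeriv_const _ _ i (by simpa using hki)] at h1
    simpa [hs, hfac0 k, Finset.prod_eq_zero_iff, Nat.factorial_ne_zero] using h1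
  by_cases hov : ∃ i, kA i ≠ 0 ∧ kB i ≠ 0
  · obtain ⟨i, hi1, hi2⟩ := hov
    have hVi : ∀ q, Vf i q = 0 := by
      intro q
      by_contra hq
      exact hdisj q ⟨⟨i, hi1, hq⟩, ⟨i, hi2, hq⟩⟩
    rw [hzero (kA + kB) i (by simp [hi1]) hVi, hzero kA i hi1 hVi, zero_mul]
  · push Not at hov
    set S : Finset (Fin Nq) := Finset.univ.filter fun q => ∃ i, kA i ≠ 0 ∧ Vf i q ≠ 0 with hS
    have hA : ∀ i, kA i ≠ 0 → ∀ q, q ∉ S → Vf i q = 0 := by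
      intro i hi q hq
      by_contra hc
      exact hq (by simp only [hS, Finset.mem_filter, Finset.mem_univ, true_and]; exact ⟨i, hi, hc⟩)
    have hB : ∀ i, kB i ≠ 0 → ∀ q, q ∈ S → Vf i q = 0 := by
      intro i hi q hq
      by_contra hc
      simp only [hS, Finset.mem_filter, Finset.mem_univ, true_and] at hq
      exact hdisj q ⟨hq, ⟨i, hi, hc⟩⟩
    have hF : DCF.Fac (fun i => ∀ q, q ∉ S → Vf i q = 0) (fun i => ∀ q, q ∈ S → Vf i q = 0)
        (DCF.mask S) (DCF.mask Sᶜ) Ψ Ψ Ψ := by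
      filter_upwards [hfactor S] with p hp hx hy s
      exact congrFun (hp hx hy).1 s
    obtain ⟨s, hs⟩ := DCF.Vpow_ne Vf (kA + kB)
    have h1 := hF.main hΨa hΨa hΨa kA kB hA hB s
    have hV := congrFun (DCF.Vpow_tens Vf S kA kB hA hB (ket fun _ => 0) (ket fun _ => 0)) s
    rw [DCF.tens_ket] at hV
    rw [hD, hD, hD] at h1
    have hfact : (((∏ i, (Nat.factorial ((kA + kB) i) : ℝ)) : ℝ) : ℂ)
        = (((∏ i, (Nat.factorial (kA i) : ℝ)) : ℝ) : ℂ)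
          * (((∏ i, (Nat.factorial (kB i) : ℝ)) : ℝ) : ℂ) := by
      rw [← Complex.ofReal_mul, ← Finset.prod_mul_distrib]
      congr 1
      refine Finset.prod_congr rfl fun i _ => ?_
      by_cases hi : kA i = 0
      · simp [hi]
      · simp [hov i hi]
    have hne := mul_ne_zero (hfac0 (kA + kB)) hs
    have h2 : ((C (kA + kB) : ℝ) : ℂ) = (C kA : ℂ) * (C kB : ℂ) := by
      refine mul_right_cancel₀ hne ?_
      have hV' := hV
      simp only [DCF.tens] at hV'
      calc _ = _ := by ring
        _ = _ := h1
        _ = _ := by rw [hV', hfact]; ring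
    exact_mod_cast h2
end
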